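/- Let n ≥ 1, let K = ℂ(x_1,…,x_n), and let f, g ∈ ℂ[x_1,…,x_n] be polynomials of degree at most one with g ≠ 0 such that the rational function f/g is not constant. Then f/g is not a square in K, and the quadratic field extension K' = K[z]/(z² − f/g) is isomorphic, as a field extension of ℂ, to the purely transcendental field ℂ(y_1,…,y_n) of transcendence degree n. -/

import Mathlib

/-!
Powers: if `(p / q) ^ m = f / g` with `p`, `q` coprime, then `p ^ m ∣ f` and `q ^ m ∣ g`, so once
`f` and `g` have degree less than `m`, both `p` and `q` are constants and `f / g` is constant.

Rationality: adjoin `z` with `z ^ m = f / g`. Some variable `xᵢ` occurs in `f` or `g`, and as both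
have degree at most one, the relation `f = z ^ m * g` can be solved for `xᵢ` as a rational function
of `z` and the other variables. Exchanging `xᵢ` for `z` in the transcendence basis of the variables
therefore gives a transcendence basis which generates the extension.
-/

noncomputable section

/-- The rational function field `ℂ(x₁,…,xₙ)`. -/
abbrev RatFF (n : ℕ) : Type := FractionRing (MvPolynomial (Fin n) ℂ)

open MvPolynomial IntermediateField

section Degree

variable {σ R : Type*}

lemma totalDegree_pow_of_noZeroDivisors [CommSemiring R] [NoZeroDivisors R]
    {p : MvPolynomial σ R} (hp : p ≠ 0) (m : ℕ) :
    (p ^ m).totalDegree = m * p.totalDegree := by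
  induction m with
  | zero => simp
  | succ m ih =>
    rw [pow_succ, totalDegree_mul_of_isDomain (pow_ne_zero m hp) hp, ih, Nat.succ_mul]

lemma eq_C_of_pow_dvd [CommSemiring R] [NoZeroDivisors R] {p f : MvPolynomial σ R} {m : ℕ}
    (hf0 : f ≠ 0) (hf : f.totalDegree < m) (h : p ^ m ∣ f) : p = C (p.coeff 0) := by
  have hp : p ≠ 0 := by
    rintro rfl
    rw [zero_pow (by lia)] at h
    exact hf0 (zero_dvd_iff.1 h)
  have hlt : m * p.totalDegree < m * 1 := by
    rw [← totalDegree_pow_of_noZeroDivisors hp, mul_one]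
    exact (totalDegree_le_of_dvd_of_isDomain h hf0).trans_lt hf
  exact totalDegree_eq_zero_iff_eq_C.1 (Nat.lt_one_iff.1 (lt_of_mul_lt_mul_left' hlt))

lemma coeff_eq_zero_of_totalDegree_le_one [CommSemiring R] {p : MvPolynomial σ R}
    (hp : p.totalDegree ≤ 1) {i : σ} {d : σ →₀ ℕ} (hdi : d i ≠ 0)
    (hd : d ≠ Finsupp.single i 1) : p.coeff d = 0 := by
  obtain ⟨e, rfl⟩ : ∃ e, d = Finsupp.single i 1 + e :=
    exists_add_of_le (by simpa [Nat.one_le_iff_ne_zero] using hdi)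
  have he : e.degree ≠ 0 := by simpa [Finsupp.degree_eq_zero_iff] using hd
  apply coeff_eq_zero_of_totalDegree_lt
  rw [← Finsupp.degree_apply, map_add, Finsupp.degree_single]
  lia

lemma sub_C_mul_X_mem_supported [CommRing R] {p : MvPolynomial σ R} (hp : p.totalDegree ≤ 1)
    (i : σ) : p - C (p.coeff (Finsupp.single i 1)) * X i ∈ supported R {i}ᶜ := by
  classical
  rw [mem_supported, Set.subset_compl_singleton_iff, Finset.mem_coe, mem_vars_iff_mem_support]
  rintro ⟨d, hd, hdi⟩
  rw [Finsupp.mem_support_iff] at hdi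
  rw [mem_support_iff, coeff_sub, coeff_C_mul, coeff_X] at hd
  split_ifs at hd with h
  · simp [h] at hd
  · simp [coeff_eq_zero_of_totalDegree_le_one hp hdi (Ne.symm h)] at hd

lemma eq_C_of_coeff_single_eq_zero [CommRing R] {p : MvPolynomial σ R} (hp : p.totalDegree ≤ 1)
    (h : ∀ i, p.coeff (Finsupp.single i 1) = 0) : p = C (p.coeff 0) := by
  refine vars_eq_empty_iff_eq_C.1 (Finset.eq_empty_of_forall_notMem fun i hi => ?_)
  have hpi : p ∈ supported R {i}ᶜ := by simpa [h i] using sub_C_mul_X_mem_supported hp i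
  exact mem_supported.1 hpi hi rfl

lemma exists_coeff_single_ne_zero [CommRing R] [Nontrivial R] {f g : MvPolynomial σ R}
    (hf : f.totalDegree ≤ 1) (hg : g.totalDegree ≤ 1) (hfg : LinearIndependent R ![f, g]) :
    ∃ i, f.coeff (Finsupp.single i 1) ≠ 0 ∨ g.coeff (Finsupp.single i 1) ≠ 0 := by
  by_contra! h
  have hfC := eq_C_of_coeff_single_eq_zero hf fun i => (h i).1
  have hgC := eq_C_of_coeff_single_eq_zero hg fun i => (h i).2
  have hdep : g.coeff 0 • f + -f.coeff 0 • g = 0 := by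
    rw [hfC, hgC]
    simp [smul_eq_C_mul, mul_comm]
  have hf0 : f.coeff 0 = 0 := neg_eq_zero.1 (LinearIndependent.pair_iff.1 hfg _ _ hdep).2
  exact hfg.ne_zero 0 (by simpa [hf0] using hfC)

lemma supported_le_comap_aeval {A : Type*} [CommSemiring R] [CommSemiring A] [Algebra R A]
    {x : σ → A} {S : Subalgebra R A} {s : Set σ} (hx : ∀ j ∈ s, x j ∈ S) :
    supported R s ≤ S.comap (aeval x) :=
  Algebra.adjoin_le <| by
    rintro _ ⟨j, hj, rfl⟩
    simpa using hx j hj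

end Degree

lemma aeval_algebraMap_X {σ R A : Type*} [CommSemiring R] [CommSemiring A] [Algebra R A]
    [Algebra (MvPolynomial σ R) A] [IsScalarTower R (MvPolynomial σ R) A] (p : MvPolynomial σ R) :
    aeval (fun i => algebraMap (MvPolynomial σ R) A (X i)) p = algebraMap _ A p :=
  (aeval_algebraMap_apply A X p).trans (congrArg _ (aeval_X_left_apply p))

section Powers

lemma exists_pow_dvd_of_pow_eq_div {A K : Type*} [CommRing A] [IsDomain A]
    [UniqueFactorizationMonoid A] [Field K] [Algebra A K] [IsFractionRing A K] {a b : A}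
    (hb : b ≠ 0) {β : K} {m : ℕ} (h : β ^ m = algebraMap A K a / algebraMap A K b) :
    ∃ p q : A, q ≠ 0 ∧ q ^ m * a = p ^ m * b ∧ p ^ m ∣ a ∧ q ^ m ∣ b := by
  obtain ⟨p, q, hpq, rfl⟩ := IsFractionRing.exists_reduced_fraction A β
  have hq : (q : A) ≠ 0 := nonZeroDivisors.coe_ne_zero q
  have cross : (q : A) ^ m * a = p ^ m * b := by
    apply IsFractionRing.injective A K
    have hbK : algebraMap A K b ≠ 0 := by simpa
    have hqK : algebraMap A K q ≠ 0 := by simp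
    rw [IsFractionRing.mk'_eq_div, div_pow, div_eq_div_iff (pow_ne_zero m hqK) hbK] at h
    simp only [map_mul, map_pow]
    rw [h, mul_comm]
  have hpq' : IsRelPrime (p ^ m) ((q : A) ^ m) := hpq.pow
  exact ⟨p, q, hq, cross, hpq'.dvd_of_dvd_mul_left ⟨b, cross⟩,
    hpq'.symm.dvd_of_dvd_mul_left ⟨a, cross.symm⟩⟩

lemma pow_ne_div_of_totalDegree_lt {σ k K : Type*} [Field k] [Field K]
    [Algebra (MvPolynomial σ k) K] [IsFractionRing (MvPolynomial σ k) K]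
    {f g : MvPolynomial σ k} {m : ℕ} (hf : f.totalDegree < m) (hg : g.totalDegree < m)
    (hfg : LinearIndependent k ![f, g]) (β : K) :
    β ^ m ≠ algebraMap (MvPolynomial σ k) K f / algebraMap (MvPolynomial σ k) K g := by
  intro h
  have hf0 : f ≠ 0 := hfg.ne_zero 0
  have hg0 : g ≠ 0 := hfg.ne_zero 1
  obtain ⟨p, q, hq, cross, hpf, hqg⟩ := exists_pow_dvd_of_pow_eq_div hg0 h
  have hpC := eq_C_of_pow_dvd hf0 hf hpf
  have hqC := eq_C_of_pow_dvd hg0 hg hqg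
  have hdep : q.coeff 0 ^ m • f + -p.coeff 0 ^ m • g = 0 := by
    rw [hpC, hqC] at cross
    simpa [smul_eq_C_mul, ← sub_eq_add_neg, sub_eq_zero] using cross
  have hq0 : q.coeff 0 = 0 := eq_zero_of_pow_eq_zero (LinearIndependent.pair_iff.1 hfg _ _ hdep).1
  exact hq (by rw [hqC, hq0, map_zero])

end Powers

lemma isTranscendenceBasis_update {ι R S : Type*} [DecidableEq ι] [CommRing R] [CommRing S]
    [Algebra R S] [FaithfulSMul R S] [NoZeroDivisors S] {x : ι → S}
    (hx : IsTranscendenceBasis R x) {i : ι} {z : S}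
    (h : IsAlgebraic (Algebra.adjoin R (Set.range (Function.update x i z))) (x i)) :
    IsTranscendenceBasis R (Function.update x i z) := by
  -- The exchange lemma compares two subfamilies of one family: here `x` together with `z`.
  let v : Option ι → S := fun o => o.elim z x
  let e : ι ≃ {o : Option ι // o ≠ none} :=
    (Equiv.optionIsSomeEquiv ι).symm.trans
      (Equiv.subtypeEquivRight fun _ => Option.isSome_iff_ne_none)
  let swap : {o : Option ι // o ≠ none} ≃ {o : Option ι // o ≠ some i} :=
    (Equiv.swap none (some i)).subtypeEquiv fun o => by
      rw [Ne, Ne, Equiv.swap_apply_eq_iff, Equiv.swap_apply_right]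
  have v_swap : (fun o : {o // o ≠ some i} => v o.1) ∘ e.trans swap = Function.update x i z := by
    funext j
    obtain rfl | hj := eq_or_ne j i
    · simp [v, e, swap]
    · simp [v, e, swap, hj, Equiv.swap_apply_of_ne_of_ne]
  have image_v : v '' {some i}ᶜ = Set.range (Function.update x i z) := by
    rw [← v_swap, EquivLike.range_comp, Set.image_eq_range]
    rfl
  have hv : IsTranscendenceBasis R fun o : {o : Option ι // o ≠ none} => v o.1 :=
    (isTranscendenceBasis_equiv e).1 hx
  rw [← v_swap, isTranscendenceBasis_equiv]
  exact hv.of_isAlgebraic_adjoin_image_compl none (some i) v (by rwa [image_v])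

section Generators

variable {k K L : Type*} [Field k] [Field K] [Field L] [Algebra k K] [Algebra k L] [Algebra K L]
  [IsScalarTower k K L]

lemma isAlgebraic_algebraAdjoin_of_mem_adjoin {S : Set L} {y : L} (hy : y ∈ adjoin k S) :
    IsAlgebraic (Algebra.adjoin k S) y := by
  obtain ⟨r, hr, s, hs, rfl⟩ := mem_adjoin_iff_div.1 hy
  rw [div_eq_mul_inv]
  exact (isAlgebraic_algebraMap (⟨r, hr⟩ : Algebra.adjoin k S)).mul
    (isAlgebraic_algebraMap (⟨s, hs⟩ : Algebra.adjoin k S)).inv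

lemma adjoin_image_union_eq_top {S : Set K} {T : Set L} (hS : adjoin k S = ⊤)
    (hT : adjoin K T = ⊤) : adjoin k (algebraMap K L '' S ∪ T) = ⊤ := by
  have hK : (adjoin k S).map (IsScalarTower.toAlgHom k K L) ≤
      adjoin k (algebraMap K L '' S ∪ T) := by
    rw [adjoin_map]
    exact adjoin.mono k _ _ Set.subset_union_left
  have hsub : (adjoin K T : Set L) ⊆ adjoin k (algebraMap K L '' S ∪ T) := by
    refine (adjoin_subset_adjoin_iff K).2
      ⟨?_, Set.subset_union_right.trans (subset_adjoin k _)⟩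
    rintro _ ⟨c, rfl⟩
    exact hK ⟨c, by simp [hS], rfl⟩
  exact top_le_iff.1 fun y _ => hsub (by simp [hT])

variable {σ : Type*} [Algebra (MvPolynomial σ k) K] [IsScalarTower k (MvPolynomial σ k) K]
  [IsFractionRing (MvPolynomial σ k) K]

lemma adjoin_range_algebraMap_X :
    adjoin k (Set.range fun i => algebraMap (MvPolynomial σ k) K (X i)) = ⊤ := by
  refine top_le_iff.1 fun c _ => ?_
  obtain ⟨p, q, -, rfl⟩ := IsFractionRing.div_surjective (A := MvPolynomial σ k) c
  have hmem (r : MvPolynomial σ k) : algebraMap (MvPolynomial σ k) K r ∈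
      Algebra.adjoin k (Set.range fun i => algebraMap (MvPolynomial σ k) K (X i)) := by
    rw [Algebra.adjoin_range_eq_range_aeval]
    exact ⟨r, aeval_algebraMap_X r⟩
  exact mem_adjoin_iff_div.2 ⟨_, hmem p, _, hmem q, rfl⟩

lemma isTranscendenceBasis_algebraMap_X :
    IsTranscendenceBasis k fun i => algebraMap (MvPolynomial σ k) K (X i) := by
  have := IsLocalization.isAlgebraic K (nonZeroDivisors (MvPolynomial σ k))
  exact (IsTranscendenceBasis.mvPolynomial σ k).algebraMap_comp

end Generators

section Rationality

variable {σ k L : Type*} [Field k] [Field L] [Algebra k L] {x : σ → L} {f g : MvPolynomial σ k}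

lemma algebraMap_sub_mul_algebraMap_ne_zero (hx : AlgebraicIndependent k x)
    (hfg : LinearIndependent k ![f, g]) {w : L} (h : aeval x f = w * aeval x g) {a b : k}
    (hab : a ≠ 0 ∨ b ≠ 0) : algebraMap k L a - w * algebraMap k L b ≠ 0 := by
  intro h0
  have hdep : -b • f + a • g = 0 := by
    apply algebraicIndependent_iff_injective_aeval.1 hx
    simp only [map_add, map_smul, map_zero, h]
    simp only [Algebra.smul_def, map_neg]
    linear_combination aeval x g * h0
  have := LinearIndependent.pair_iff.1 hfg _ _ hdep
  exact hab.elim (· this.2) (· (neg_eq_zero.1 this.1))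

lemma mem_of_aeval_eq_mul_aeval (hx : AlgebraicIndependent k x) (hf : f.totalDegree ≤ 1)
    (hg : g.totalDegree ≤ 1) (hfg : LinearIndependent k ![f, g]) {w : L}
    (h : aeval x f = w * aeval x g) {i : σ}
    (hi : f.coeff (Finsupp.single i 1) ≠ 0 ∨ g.coeff (Finsupp.single i 1) ≠ 0)
    {M : IntermediateField k L} (hw : w ∈ M) (hM : ∀ j ≠ i, x j ∈ M) : x i ∈ M := by
  set a := f.coeff (Finsupp.single i 1)
  set b := g.coeff (Finsupp.single i 1)
  have hr : aeval x (f - C a * X i) ∈ M :=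
    supported_le_comap_aeval (S := M.toSubalgebra) hM (sub_C_mul_X_mem_supported hf i)
  have hs : aeval x (g - C b * X i) ∈ M :=
    supported_le_comap_aeval (S := M.toSubalgebra) hM (sub_C_mul_X_mem_supported hg i)
  have solved : x i = (w * aeval x (g - C b * X i) - aeval x (f - C a * X i)) /
      (algebraMap k L a - w * algebraMap k L b) := by
    rw [eq_div_iff (algebraMap_sub_mul_algebraMap_ne_zero hx hfg h hi)]
    simp only [map_sub, map_mul, aeval_X, algHom_C]
    linear_combination h
  rw [solved]
  exact div_mem (sub_mem (mul_mem hw hs) hr)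
    (sub_mem (M.algebraMap_mem a) (mul_mem hw (M.algebraMap_mem b)))

theorem nonempty_algEquiv_fractionRing_of_aeval_eq_mul_aeval (hx : IsTranscendenceBasis k x)
    (hf : f.totalDegree ≤ 1) (hg : g.totalDegree ≤ 1) (hfg : LinearIndependent k ![f, g])
    {z w : L} (hw : w ∈ k⟮z⟯) (h : aeval x f = w * aeval x g)
    (htop : adjoin k (Set.range x ∪ {z}) = ⊤) :
    Nonempty (L ≃ₐ[k] FractionRing (MvPolynomial σ k)) := by
  classical
  obtain ⟨i, hi⟩ := exists_coeff_single_ne_zero hf hg hfg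
  let y := Function.update x i z
  have hz : z ∈ adjoin k (Set.range y) := subset_adjoin k _ ⟨i, by simp [y]⟩
  have hxj : ∀ j ≠ i, x j ∈ adjoin k (Set.range y) := fun j hj =>
    subset_adjoin k _ ⟨j, by simp [y, hj]⟩
  have hxi : x i ∈ adjoin k (Set.range y) :=
    mem_of_aeval_eq_mul_aeval hx.1 hf hg hfg h hi (adjoin_simple_le_iff.2 hz hw) hxj
  have hy : IsTranscendenceBasis k y :=
    isTranscendenceBasis_update hx (isAlgebraic_algebraAdjoin_of_mem_adjoin hxi)
  have hytop : adjoin k (Set.range y) = ⊤ := by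
    refine top_le_iff.1 (htop ▸ adjoin_le_iff.2 (Set.union_subset ?_ (by simpa using hz)))
    rintro _ ⟨j, rfl⟩
    obtain rfl | hj := eq_or_ne j i
    exacts [hxi, hxj j hj]
  exact ⟨(hy.1.aevalEquivField.trans ((equivOfEq hytop).trans topEquiv)).symm⟩

theorem nonempty_algEquiv_fractionRing_of_algebraMap_div_mem {K : Type*} [Field K]
    [Algebra (MvPolynomial σ k) K] [IsFractionRing (MvPolynomial σ k) K] [Algebra k K]
    [IsScalarTower k (MvPolynomial σ k) K] [Algebra K L] [IsScalarTower k K L]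
    [Algebra.IsAlgebraic K L] (hf : f.totalDegree ≤ 1) (hg : g.totalDegree ≤ 1)
    (hfg : LinearIndependent k ![f, g]) {z : L} (htop : K⟮z⟯ = ⊤)
    (hz : algebraMap K L (algebraMap (MvPolynomial σ k) K f / algebraMap (MvPolynomial σ k) K g) ∈
      k⟮z⟯) :
    Nonempty (L ≃ₐ[k] FractionRing (MvPolynomial σ k)) := by
  have hx : IsTranscendenceBasis k
      (algebraMap K L ∘ fun i => algebraMap (MvPolynomial σ k) K (X i)) :=
    isTranscendenceBasis_algebraMap_X.algebraMap_comp
  have aeval_eq (q : MvPolynomial σ k) :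
      aeval (algebraMap K L ∘ fun i => algebraMap (MvPolynomial σ k) K (X i)) q =
        algebraMap K L (algebraMap (MvPolynomial σ k) K q) :=
    (aeval_algebraMap_apply L _ q).trans (congrArg _ (aeval_algebraMap_X q))
  have hgK : algebraMap (MvPolynomial σ k) K g ≠ 0 := by simpa using hfg.ne_zero 1
  refine nonempty_algEquiv_fractionRing_of_aeval_eq_mul_aeval hx hf hg hfg hz ?_ ?_
  · rw [aeval_eq, aeval_eq, ← map_mul, div_mul_cancel₀ _ hgK]
  · rw [Set.range_comp]
    exact adjoin_image_union_eq_top adjoin_range_algebraMap_X htop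

end Rationality

theorem quadratic_extension_by_root_of_linear_quotient_is_rational_general
    {σ k : Type*} [Field k] {p : ℕ} (hp : p.Prime) {f g : MvPolynomial σ k}
    (hf : f.totalDegree ≤ 1) (hg : g.totalDegree ≤ 1) (hfg : LinearIndependent k ![f, g])
    {α : FractionRing (MvPolynomial σ k)}
    (hα : α = algebraMap (MvPolynomial σ k) (FractionRing (MvPolynomial σ k)) f /
      algebraMap (MvPolynomial σ k) (FractionRing (MvPolynomial σ k)) g) :
    (¬ ∃ β, β ^ p = α) ∧
      Nonempty (AdjoinRoot (Polynomial.X ^ p - Polynomial.C α) ≃ₐ[k]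
        FractionRing (MvPolynomial σ k)) := by
  let K := FractionRing (MvPolynomial σ k)
  have hpow (β : K) : β ^ p ≠ α := hα ▸ pow_ne_div_of_totalDegree_lt
    (hf.trans_lt hp.one_lt) (hg.trans_lt hp.one_lt) hfg β
  refine ⟨not_exists.2 hpow, ?_⟩
  have hirr := X_pow_sub_C_irreducible_of_prime hp hpow
  have : Fact (Irreducible (Polynomial.X ^ p - Polynomial.C α)) := ⟨hirr⟩
  have : Module.Finite K (AdjoinRoot (Polynomial.X ^ p - Polynomial.C α)) :=
    (AdjoinRoot.powerBasis hirr.ne_zero).finite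
  refine nonempty_algEquiv_fractionRing_of_algebraMap_div_mem (K := K) hf hg hfg
    (adjoin_eq_top_of_algebra _ _ AdjoinRoot.adjoinRoot_eq_top) ?_
  rw [← hα, AdjoinRoot.algebraMap_eq, ← root_X_pow_sub_C_pow p α]
  exact pow_mem (mem_adjoin_simple_self k _) p

/-- Key step in the unirationality criterion: for `K = ℂ(x₁,…,xₙ)` and polynomials
`f, g ∈ ℂ[x₁,…,xₙ]` of degree at most one with `g ≠ 0` such that `f/g` is not constant,
the element `f/g` is not a square in `K`, and the quadratic extension
`K' = K[z]/(z² - f/g)` is isomorphic, as a field extension of `ℂ`, to the purely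
transcendental field `ℂ(y₁,…,yₙ)` of transcendence degree `n`. -/
theorem quadratic_extension_by_root_of_linear_quotient_is_rational
    (n : ℕ) (hn : 1 ≤ n) (f g : MvPolynomial (Fin n) ℂ)
    (hf : f.totalDegree ≤ 1) (hg : g.totalDegree ≤ 1) (hg0 : g ≠ 0)
    (hnonconst : ∀ c : ℂ, f ≠ c • g)
    (α : RatFF n)
    (hα : α = algebraMap (MvPolynomial (Fin n) ℂ) (RatFF n) f /
            algebraMap (MvPolynomial (Fin n) ℂ) (RatFF n) g) :
    (¬ ∃ β : RatFF n, β ^ 2 = α) ∧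
      Nonempty (AdjoinRoot (Polynomial.X ^ 2 - Polynomial.C α) ≃ₐ[ℂ] RatFF n) := by
  exact quadratic_extension_by_root_of_linear_quotient_is_rational_general Nat.prime_two hf hg
    (LinearIndependent.pair_symm_iff.1 <|
      (LinearIndependent.pair_iff' hg0).2 fun c => (hnonconst c).symm) hα
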